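/- Suppose the unit vectors u_1,…,u_m and positive weights c_1,…,c_m satisfy John's conditions, and let K = {x ∈ ℝ^n : ⟨x, u_i⟩ ≤ 1 for all i}. Then for all x, y ∈ K, ‖x − y‖ ≤ √(2n(n+1)); that is, the diameter of K is at most √(2n(n+1)). -/

import Mathlib

/-!
Taking traces in `∑ cᵢ uᵢ ⊗ uᵢ = I` gives `∑ cᵢ = n`. For `x, y ∈ K`, two sums with nonnegative
terms give the bounds needed:

* `∑ cᵢ (1 - ⟪x, uᵢ⟫) (1 - ⟪y, uᵢ⟫) = n + ⟪x, y⟫`, so `⟪x, y⟫ ≥ -n`;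
* `∑ cᵢ (1 - ⟪x, uᵢ⟫) (‖x‖ + ⟪x, uᵢ⟫) = n ‖x‖ - ‖x‖²`, so `‖x‖ ≤ n` (and likewise for `y`).

Hence `‖x - y‖² = ‖x‖² + ‖y‖² - 2 ⟪x, y⟫ ≤ 2 n² + 2 n`.
-/

open Finset RealInnerProductSpace

lemma john_sum_inner {n m : ℕ} {u : Fin m → EuclideanSpace ℝ (Fin n)} {c : Fin m → ℝ}
    (ha : ∑ i, c i • u i = 0) (x : EuclideanSpace ℝ (Fin n)) :
    ∑ i, c i * ⟪x, u i⟫ = 0 := by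
  have h := congrArg (fun z => ⟪x, z⟫) ha
  simpa [inner_sum, inner_smul_right] using h

lemma john_sum_inner_mul {n m : ℕ} {u : Fin m → EuclideanSpace ℝ (Fin n)} {c : Fin m → ℝ}
    (hb : ∀ x : EuclideanSpace ℝ (Fin n), ∑ i, (c i * ⟪u i, x⟫) • u i = x)
    (x y : EuclideanSpace ℝ (Fin n)) :
    ∑ i, c i * (⟪x, u i⟫ * ⟪y, u i⟫) = ⟪x, y⟫ := by
  have h := congrArg (fun z => ⟪x, z⟫) (hb y)
  simp only [inner_sum, inner_smul_right] at h
  rw [← h]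
  refine Finset.sum_congr rfl fun i _ => ?_
  rw [real_inner_comm (u i) y]
  ring

/-- The trace of the decomposition of the identity. -/
lemma john_sum_weights {n m : ℕ} {u : Fin m → EuclideanSpace ℝ (Fin n)} {c : Fin m → ℝ}
    (hu : ∀ i, ‖u i‖ = 1)
    (hb : ∀ x : EuclideanSpace ℝ (Fin n), ∑ i, (c i * ⟪u i, x⟫) • u i = x) :
    ∑ i, c i = n := by
  have h1 : ∀ i, ∑ j, (u i j * u i j) = 1 := fun i => by
    have h := EuclideanSpace.real_norm_sq_eq (u i)
    rw [hu i] at h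
    simpa [sq] using h.symm
  have h2 : ∀ j : Fin n, ∑ i, c i * (u i j * u i j) = 1 := fun j => by
    have h := john_sum_inner_mul hb (EuclideanSpace.single j 1) (EuclideanSpace.single j 1)
    simpa [EuclideanSpace.inner_single_left] using h
  calc ∑ i, c i = ∑ i, ∑ j, c i * (u i j * u i j) := by
        simp only [← Finset.mul_sum, h1, mul_one]
    _ = ∑ j, ∑ i, c i * (u i j * u i j) := Finset.sum_comm
    _ = n := by simp [h2]

lemma john_norm_le {n m : ℕ} {u : Fin m → EuclideanSpace ℝ (Fin n)} {c : Fin m → ℝ}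
    (hu : ∀ i, ‖u i‖ = 1) (hc : ∀ i, 0 < c i) (ha : ∑ i, c i • u i = 0)
    (hb : ∀ x : EuclideanSpace ℝ (Fin n), ∑ i, (c i * ⟪u i, x⟫) • u i = x)
    (x : EuclideanSpace ℝ (Fin n)) (hx : ∀ i, ⟪x, u i⟫ ≤ 1) : ‖x‖ ≤ n := by
  have hpos : 0 ≤ ∑ i, c i * ((1 - ⟪x, u i⟫) * (‖x‖ + ⟪x, u i⟫)) := by
    refine Finset.sum_nonneg fun i _ => mul_nonneg (hc i).le (mul_nonneg ?_ ?_)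
    · linarith [hx i]
    · have h := abs_le.mp (abs_real_inner_le_norm x (u i))
      rw [hu i, mul_one] at h
      linarith [h.1]
  have heq : ∑ i, c i * ((1 - ⟪x, u i⟫) * (‖x‖ + ⟪x, u i⟫)) =
      ‖x‖ * ∑ i, c i + (1 - ‖x‖) * ∑ i, c i * ⟪x, u i⟫ - ∑ i, c i * (⟪x, u i⟫ * ⟪x, u i⟫) := by
    rw [Finset.mul_sum, Finset.mul_sum, ← Finset.sum_add_distrib, ← Finset.sum_sub_distrib]
    exact Finset.sum_congr rfl fun i _ => by ring
  rw [heq, john_sum_weights hu hb, john_sum_inner ha, john_sum_inner_mul hb,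
    real_inner_self_eq_norm_sq] at hpos
  by_contra! h
  have hn : (0 : ℝ) ≤ n := n.cast_nonneg
  nlinarith

lemma john_neg_le_inner {n m : ℕ} {u : Fin m → EuclideanSpace ℝ (Fin n)} {c : Fin m → ℝ}
    (hu : ∀ i, ‖u i‖ = 1) (hc : ∀ i, 0 < c i) (ha : ∑ i, c i • u i = 0)
    (hb : ∀ x : EuclideanSpace ℝ (Fin n), ∑ i, (c i * ⟪u i, x⟫) • u i = x)
    (x y : EuclideanSpace ℝ (Fin n)) (hx : ∀ i, ⟪x, u i⟫ ≤ 1) (hy : ∀ i, ⟪y, u i⟫ ≤ 1) :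
    -(n : ℝ) ≤ ⟪x, y⟫ := by
  have hpos : 0 ≤ ∑ i, c i * ((1 - ⟪x, u i⟫) * (1 - ⟪y, u i⟫)) :=
    Finset.sum_nonneg fun i _ => mul_nonneg (hc i).le
      (mul_nonneg (sub_nonneg.mpr (hx i)) (sub_nonneg.mpr (hy i)))
  have heq : ∑ i, c i * ((1 - ⟪x, u i⟫) * (1 - ⟪y, u i⟫)) =
      ∑ i, c i - ∑ i, c i * ⟪x, u i⟫ - ∑ i, c i * ⟪y, u i⟫
        + ∑ i, c i * (⟪x, u i⟫ * ⟪y, u i⟫) := by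
    rw [← Finset.sum_sub_distrib, ← Finset.sum_sub_distrib, ← Finset.sum_add_distrib]
    exact Finset.sum_congr rfl fun i _ => by ring
  rw [heq, john_sum_weights hu hb, john_sum_inner ha, john_sum_inner ha,
    john_sum_inner_mul hb] at hpos
  linarith

/-- Under John's conditions, the diameter of `K = {x : ⟪x, u i⟫ ≤ 1 ∀ i}` is at
most `√(2n(n+1))`: any two points `x, y` of `K` satisfy `‖x - y‖ ≤ √(2n(n+1))`. -/
theorem stmt_16 {n m : ℕ} (hn : 1 ≤ n) (hm : 1 ≤ m)
    (u : Fin m → EuclideanSpace ℝ (Fin n)) (c : Fin m → ℝ)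
    (hu : ∀ i, ‖u i‖ = 1) (hc : ∀ i, 0 < c i)
    (ha : ∑ i, c i • u i = 0)
    (hb : ∀ x : EuclideanSpace ℝ (Fin n), ∑ i, (c i * ⟪u i, x⟫) • u i = x)
    (x y : EuclideanSpace ℝ (Fin n))
    (hx : ∀ i, ⟪x, u i⟫ ≤ 1) (hy : ∀ i, ⟪y, u i⟫ ≤ 1) :
    ‖x - y‖ ≤ Real.sqrt (2 * n * (n + 1)) := by
  apply Real.le_sqrt_of_sq_le
  rw [norm_sub_sq_real]
  have h1 := pow_le_pow_left₀ (norm_nonneg x) (john_norm_le hu hc ha hb x hx) 2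
  have h2 := pow_le_pow_left₀ (norm_nonneg y) (john_norm_le hu hc ha hb y hy) 2
  have h3 := john_neg_le_inner hu hc ha hb x y hx hy
  linarith
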